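/- Let X and Ω be finite nonempty sets, p* and p† probability vectors on Ω, ε > 0 with d(p†, p*) ≤ ε, g : X × Ω → ℝ, h ∈ ℝ, α ∈ (0,1), and ξ > 0 with 2ε < ξ. Define G_t(x) = inf_{p ∈ A(p*, ε)} ∑_{w ∈ Ω} 1[g(x,w) > h] p(w) and G̃(x) = ∑_{w ∈ Ω} 1[g(x,w) > h] p†(w). If x ∈ X satisfies G̃(x) > α, then G_t(x) > α − ξ; that is, every feasible point of the chance-constrained problem at level α under p† is feasible for the distributionally robust chance constraint at the relaxed level α − ξ. -/

import Mathlib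

open Finset

/-- A probability vector on a finite set `Ω`. -/
def IsProbVec {Ω : Type*} [Fintype Ω] (p : Ω → ℝ) : Prop :=
  (∀ w, 0 ≤ p w) ∧ ∑ w, p w = 1

/-- The L1 ambiguity set of radius `ε` around a reference distribution `pstar`. -/
def AmbiguitySet {Ω : Type*} [Fintype Ω] (pstar : Ω → ℝ) (ε : ℝ) : Set (Ω → ℝ) :=
  {p | IsProbVec p ∧ ∑ w, |p w - pstar w| ≤ ε}

/-!
Two probability vectors `p`, `q` have the same mass, so replacing `f` by `f - c` does not change
`∑ f p - ∑ f q`. Centring an `[a, b]`-valued `f` at the midpoint bounds this difference by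
`(b - a) / 2 * ∑ |p - q|`. Members of an ambiguity set of radius `ε` are at distance at most `2ε`
from each other, so passing to the worst case costs at most `(b - a) * ε`.
-/

section Oscillation

variable {ι R : Type*} [Field R] [LinearOrder R] [IsStrictOrderedRing R]

theorem abs_sub_midpoint_le {a b y : R} (hy : y ∈ Set.Icc a b) :
    |y - (a + b) / 2| ≤ (b - a) / 2 :=
  abs_le.2 ⟨by linarith [hy.1], by linarith [hy.2]⟩

theorem sum_mul_sub_sum_mul_le_of_sum_eq {s : Finset ι} {f p q : ι → R} {a b : R}
    (hf : ∀ i ∈ s, f i ∈ Set.Icc a b) (hpq : ∑ i ∈ s, p i = ∑ i ∈ s, q i) :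
    ∑ i ∈ s, f i * p i - ∑ i ∈ s, f i * q i ≤ (b - a) / 2 * ∑ i ∈ s, |p i - q i| := by
  calc ∑ i ∈ s, f i * p i - ∑ i ∈ s, f i * q i
      = ∑ i ∈ s, (f i - (a + b) / 2) * (p i - q i) := by
        simp only [sub_mul, mul_sub, sum_sub_distrib, ← mul_sum, hpq]
        ring
    _ ≤ ∑ i ∈ s, (b - a) / 2 * |p i - q i| := by
        refine sum_le_sum fun i hi ↦ (le_abs_self _).trans ?_
        rw [abs_mul]
        gcongr
        exact abs_sub_midpoint_le (hf i hi)
    _ = (b - a) / 2 * ∑ i ∈ s, |p i - q i| := (mul_sum _ _ _).symm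

end Oscillation

section Ambiguity

variable {Ω : Type*} [Fintype Ω] {pstar p q f : Ω → ℝ} {ε a b : ℝ}

theorem IsProbVec.nonempty (hp : IsProbVec p) : Nonempty Ω := by
  by_contra hΩ
  rw [not_nonempty_iff] at hΩ
  simpa using hp.2

theorem sum_abs_sub_le_of_mem_ambiguitySet (hp : p ∈ AmbiguitySet pstar ε)
    (hq : q ∈ AmbiguitySet pstar ε) : ∑ w, |p w - q w| ≤ 2 * ε := by
  calc ∑ w, |p w - q w|
      ≤ ∑ w, (|p w - pstar w| + |q w - pstar w|) :=
        sum_le_sum fun w _ ↦ abs_sub_comm (q w) (pstar w) ▸ abs_sub_le _ _ _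
    _ = ∑ w, |p w - pstar w| + ∑ w, |q w - pstar w| := sum_add_distrib
    _ ≤ 2 * ε := by linarith [hp.2, hq.2]

theorem sum_mul_sub_sum_mul_le_of_mem_ambiguitySet (hp : p ∈ AmbiguitySet pstar ε)
    (hq : q ∈ AmbiguitySet pstar ε) (hf : ∀ w, f w ∈ Set.Icc a b) :
    ∑ w, f w * p w - ∑ w, f w * q w ≤ (b - a) * ε := by
  obtain ⟨w₀⟩ := hp.1.nonempty
  have hab : a ≤ b := (hf w₀).1.trans (hf w₀).2
  calc ∑ w, f w * p w - ∑ w, f w * q w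
      ≤ (b - a) / 2 * ∑ w, |p w - q w| :=
        sum_mul_sub_sum_mul_le_of_sum_eq (fun w _ ↦ hf w) (hp.1.2.trans hq.1.2.symm)
    _ ≤ (b - a) / 2 * (2 * ε) :=
        mul_le_mul_of_nonneg_left (sum_abs_sub_le_of_mem_ambiguitySet hp hq) (by linarith)
    _ = (b - a) * ε := by ring

theorem sum_mul_sub_le_sInf_image_ambiguitySet (hp : p ∈ AmbiguitySet pstar ε)
    (hf : ∀ w, f w ∈ Set.Icc a b) :
    ∑ w, f w * p w - (b - a) * ε ≤ sInf ((fun q ↦ ∑ w, f w * q w) '' AmbiguitySet pstar ε) := by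
  refine le_csInf ⟨_, p, hp, rfl⟩ ?_
  rintro _ ⟨q, hq, rfl⟩
  exact sub_le_comm.1 (sum_mul_sub_sum_mul_le_of_mem_ambiguitySet hp hq hf)

theorem cc_feasible_implies_drcc_feasible_general {α ξ : ℝ} (hp : p ∈ AmbiguitySet pstar ε)
    (hf : ∀ w, f w ∈ Set.Icc a b) (hξ : (b - a) * ε ≤ ξ) (hfeas : α < ∑ w, f w * p w) :
    α - ξ < sInf ((fun q ↦ ∑ w, f w * q w) '' AmbiguitySet pstar ε) :=
  (by linarith : α - ξ < ∑ w, f w * p w - (b - a) * ε).trans_le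
    (sum_mul_sub_le_sInf_image_ambiguitySet hp hf)

end Ambiguity

/-- Every feasible point of the chance-constrained problem at level `α` under
`p†` is feasible for the distributionally robust chance constraint at the
relaxed level `α − ξ` (when `2ε < ξ`). -/
theorem cc_feasible_implies_drcc_feasible
    {X : Type*} [Fintype X] [Nonempty X] {Ω : Type*} [Fintype Ω] [Nonempty Ω]
    (pstar pdag : Ω → ℝ) (hpstar : IsProbVec pstar) (hpdag : IsProbVec pdag)
    (ε : ℝ) (hε : 0 < ε) (hdist : ∑ w, |pdag w - pstar w| ≤ ε)
    (g : X → Ω → ℝ) (h α ξ : ℝ) (hα : α ∈ Set.Ioo (0:ℝ) 1) (hξ : 0 < ξ) (hεξ : 2 * ε < ξ)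
    (Gt : X → ℝ)
    (hGt : ∀ x, Gt x =
      sInf ((fun p => ∑ w, (if h < g x w then (1:ℝ) else 0) * p w) '' AmbiguitySet pstar ε))
    (Gtil : X → ℝ)
    (hGtil : ∀ x, Gtil x = ∑ w, (if h < g x w then (1:ℝ) else 0) * pdag w)
    (x : X) (hfeas : α < Gtil x) :
    α - ξ < Gt x := by
  rw [hGt]
  exact cc_feasible_implies_drcc_feasible_general (a := 0) (b := 1) ⟨hpdag, hdist⟩
    (fun w ↦ by split_ifs <;> simp) (by linarith) (hGtil x ▸ hfeas)
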